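/- Tightness of the refined bound on its first segment: let 0 < t < 1/2, let Δ ∈ (0, 1−2t) and δ > 0. Then there exist probability mass functions pr and q on C × X (where C and X are finite types with at least two elements each), together with choices of maximizers c_*^x of c ↦ pr(c,x) and c_q^x of c ↦ q(c,x), such that the Bayes error satisfies E_* ≤ t, the global error mismatch satisfies Δ_q = Δ, pr is supported where q is positive, and D_KL(pr‖q) ≤ (Δ + 2t)·B(Δ/(Δ + 2t)) + δ. -/

import Mathlib

/-!
The bound is attained exactly, by a distribution with three atoms. Put `s = Δ + 2t`, fix classes
`a ≠ b` and observations `x₀ ≠ x₁`. At `x₀` let `pr` give mass `t` to `a` and `Δ + t` to `b`,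
and let `q` split the same total mass `s` evenly between them; at `x₁` let both give the remaining
mass `1 - s` to `a`. Since `q` is tied at `x₀`, the class `a` is an admissible maximizer there,
which produces the mismatch `Δ`, while the Bayes error is `t`. Only `x₀` contributes to the
divergence, and since `1 ± u = 2(Δ + t)/s, 2t/s` for `u = Δ/s`, that contribution is `s · B u`.
-/

open Classical in
/-- The function on `C × X` with value `u` at `(a, x₀)`, `v` at `(b, x₀)`, `w` at `(a, x₁)` and
`0` elsewhere (for `a ≠ b` and `x₀ ≠ x₁`). -/
noncomputable def threeAtoms {C X : Type*} (a b : C) (x₀ x₁ : X) (u v w : ℝ) (p : C × X) : ℝ :=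
  if p.2 = x₀ then (if p.1 = a then u else if p.1 = b then v else 0)
  else if p.2 = x₁ then (if p.1 = a then w else 0) else 0

lemma sum_threeAtoms {C X : Type*} [Fintype C] [Fintype X] {a b : C} (hab : a ≠ b)
    {x₀ x₁ : X} (hx : x₀ ≠ x₁) (u v w : ℝ) :
    ∑ c, ∑ x, threeAtoms a b x₀ x₁ u v w (c, x) = u + v + w := by
  classical
  have h : ∀ c x, threeAtoms a b x₀ x₁ u v w (c, x) =
      (if c = a then (if x = x₀ then u else 0) else 0)
      + (if c = b then (if x = x₀ then v else 0) else 0)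
      + (if c = a then (if x = x₁ then w else 0) else 0) := by
    intro c x
    unfold threeAtoms
    grind
  simp only [h, Finset.sum_add_distrib]
  rw [Finset.sum_comm (γ := C), Finset.sum_comm (γ := C), Finset.sum_comm (γ := C)]
  simp


/-- `B(u) := ((1+u)·log(1+u) + (1−u)·log(1−u))/2` (natural log; `Real.log 0 = 0`). -/
noncomputable def B (u : ℝ) : ℝ :=
  ((1 + u) * Real.log (1 + u) + (1 - u) * Real.log (1 - u)) / 2

/-- Tightness of the refined bound on its first segment: for `0 < t < 1/2`,
`Δ ∈ (0, 1−2t)` and `δ > 0`, there are pmfs `pr, q` on `C × X` together with choices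
of maximizers `c_*^x` and `c_q^x` such that `E_* ≤ t`, `Δ_q = Δ`, `pr` is supported
where `q` is positive, and `D_KL(pr‖q) ≤ (Δ + 2t)·B(Δ/(Δ + 2t)) + δ`.
(Terms with `pr (c, x) = 0` contribute `0` to the KL sum since `0 * log _ = 0`.) -/
theorem refined_bound_tight_first_segment {C X : Type*}
    [Fintype C] [Nontrivial C] [Fintype X] [Nontrivial X]
    (t : ℝ) (ht0 : 0 < t) (ht : t < 1 / 2)
    (Δ : ℝ) (hΔ0 : 0 < Δ) (hΔ1 : Δ < 1 - 2 * t) (δ : ℝ) (hδ : 0 < δ) :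
    ∃ (pr q : C × X → ℝ) (cs cq : X → C),
      (∀ p, 0 ≤ pr p) ∧ (∑ p, pr p = 1) ∧
      (∀ p, 0 ≤ q p) ∧ (∑ p, q p = 1) ∧
      (∀ x c, pr (c, x) ≤ pr (cs x, x)) ∧
      (∀ x c, q (c, x) ≤ q (cq x, x)) ∧
      1 - ∑ x, pr (cs x, x) ≤ t ∧
      ∑ x, (pr (cs x, x) - pr (cq x, x)) = Δ ∧
      (∀ p, pr p ≠ 0 → 0 < q p) ∧
      ∑ c, ∑ x, pr (c, x) * Real.log (pr (c, x) / q (c, x)) ≤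
        (Δ + 2 * t) * B (Δ / (Δ + 2 * t)) + δ := by
  classical
  obtain ⟨a, b, hab⟩ := exists_pair_ne C
  obtain ⟨x₀, x₁, hx⟩ := exists_pair_ne X
  have hs : 0 < Δ + 2 * t := by linarith
  -- Summing over `x` amounts to two atoms, at `x₀` and at `x₁`.
  have hsum : ∀ u w : ℝ, ∑ x, (if x = x₀ then u else if x = x₁ then w else 0) = u + w := by
    intro u w
    have h : ∀ x, (if x = x₀ then u else if x = x₁ then w else 0) =
        (if x = x₀ then u else 0) + (if x = x₁ then w else 0) := by
      intro x
      grind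
    simp only [h, Finset.sum_add_distrib]
    simp
  refine ⟨threeAtoms a b x₀ x₁ t (Δ + t) (1 - (Δ + 2 * t)),
    threeAtoms a b x₀ x₁ ((Δ + 2 * t) / 2) ((Δ + 2 * t) / 2) (1 - (Δ + 2 * t)),
    fun x => if x = x₀ then b else a, fun _ => a, ?_, ?_, ?_, ?_, ?_, ?_, ?_, ?_, ?_, ?_⟩
  · intro p
    unfold threeAtoms
    split_ifs <;> linarith
  · rw [Fintype.sum_prod_type, sum_threeAtoms hab hx]
    ring
  · intro p
    unfold threeAtoms
    split_ifs <;> linarith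
  · rw [Fintype.sum_prod_type, sum_threeAtoms hab hx]
    ring
  · intro x c
    simp only [threeAtoms]
    grind
  · intro x c
    simp only [threeAtoms]
    grind
  · have h : ∀ x, threeAtoms a b x₀ x₁ t (Δ + t) (1 - (Δ + 2 * t)) (if x = x₀ then b else a, x) =
        if x = x₀ then Δ + t else if x = x₁ then 1 - (Δ + 2 * t) else 0 := by
      intro x
      simp only [threeAtoms]
      grind
    simp only [h, hsum]
    linarith
  · have h : ∀ x, threeAtoms a b x₀ x₁ t (Δ + t) (1 - (Δ + 2 * t)) (if x = x₀ then b else a, x)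
        - threeAtoms a b x₀ x₁ t (Δ + t) (1 - (Δ + 2 * t)) (a, x) =
        if x = x₀ then Δ else if x = x₁ then 0 else 0 := by
      intro x
      simp only [threeAtoms]
      grind
    simp only [h, hsum]
    ring
  · intro p
    simp only [threeAtoms]
    grind
  · have h : ∀ c x, threeAtoms a b x₀ x₁ t (Δ + t) (1 - (Δ + 2 * t)) (c, x) *
        Real.log (threeAtoms a b x₀ x₁ t (Δ + t) (1 - (Δ + 2 * t)) (c, x) /
          threeAtoms a b x₀ x₁ ((Δ + 2 * t) / 2) ((Δ + 2 * t) / 2) (1 - (Δ + 2 * t)) (c, x)) =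
        threeAtoms a b x₀ x₁ (t * Real.log (t / ((Δ + 2 * t) / 2)))
          ((Δ + t) * Real.log ((Δ + t) / ((Δ + 2 * t) / 2))) 0 (c, x) := by
      intro c x
      have h1 : 1 - (Δ + 2 * t) ≠ 0 := by linarith
      simp only [threeAtoms]
      split_ifs <;> simp [div_self h1]
    simp only [h]
    rw [sum_threeAtoms hab hx, B]
    have e1 : 1 + Δ / (Δ + 2 * t) = (Δ + t) / ((Δ + 2 * t) / 2) := by
      field_simp
      ring
    have e2 : 1 - Δ / (Δ + 2 * t) = t / ((Δ + 2 * t) / 2) := by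
      field_simp
      ring
    rw [e1, e2]
    -- The logarithms are made atoms so that clearing denominators does not rewrite inside them.
    generalize Real.log ((Δ + t) / ((Δ + 2 * t) / 2)) = L₁
    generalize Real.log (t / ((Δ + 2 * t) / 2)) = L₂
    have e3 : (Δ + 2 * t) * (((Δ + t) / ((Δ + 2 * t) / 2) * L₁
        + t / ((Δ + 2 * t) / 2) * L₂) / 2) = (Δ + t) * L₁ + t * L₂ := by
      field_simp
    linarith
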